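/- arXiv:math/0412107 — 3 statements merged into one kernel-verified Lean document; each statement's English description precedes it below -/
import Mathlib

section
/- Let H be a complex Hilbert space and T : H → H a contraction, with D₊ = √(1 − T T*), 𝒟₊ = closure(range D₊), and C : H → ℓ²(ℕ, 𝒟₊) defined by (C h)ₙ = D₊ (T*)ⁿ h. Then C is an isometry (‖C h‖ = ‖h‖ for all h ∈ H) if and only if T is *-stable, i.e. (T*)ⁿ h → 0 in norm for every h ∈ H. -/
open ContinuousLinearMap Filter

/-- The defect space of an operator: the closure of its range. -/
noncomputable def defectSpace {H : Type*} [NormedAddCommGroup H] [InnerProductSpace ℂ H]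
    (D : H →L[ℂ] H) : Submodule ℂ H :=
  (LinearMap.range (D : H →ₗ[ℂ] H)).topologicalClosure

/-- For a contraction `T` with defect operator `D₊ = √(1 - T T*)` and the map
`C : H → ℓ²(ℕ, 𝒟₊)`, `(C h)ₙ = D₊ (T*)ⁿ h`, the map `C` is an isometry if and only if
`T` is `*`-stable, i.e., `(T*)ⁿ h → 0` in norm for every `h`. -/
theorem defect_embedding_isometry_iff_star_stable
    {H : Type*} [NormedAddCommGroup H] [InnerProductSpace ℂ H] [CompleteSpace H]
    (T Dp : H →L[ℂ] H) (hT : ‖T‖ ≤ 1)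
    (hDp : Dp.IsPositive) (hDp2 : Dp ∘L Dp = 1 - T ∘L adjoint T)
    (C : H →L[ℂ] lp (fun _ : ℕ => ↥(defectSpace Dp)) 2)
    (hC : ∀ (h : H) (n : ℕ), ((C h) n : H) = Dp (((adjoint T) ^ n) h)) :
    (∀ h : H, ‖C h‖ = ‖h‖) ↔
      ∀ h : H, Tendsto (fun n : ℕ => ((adjoint T) ^ n) h) atTop (nhds 0) := by
  have key : ∀ x : H, ‖Dp x‖ ^ 2 = ‖x‖ ^ 2 - ‖adjoint T x‖ ^ 2 := by
    intro x
    have hsa : adjoint Dp = Dp := hDp.isSelfAdjoint.adjoint_eq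
    have h1 : inner ℂ (Dp x) (Dp x) = inner ℂ x ((Dp ∘L Dp) x) := by
      rw [← ContinuousLinearMap.adjoint_inner_right, hsa]; rfl
    have h2 : inner ℂ x ((T ∘L adjoint T) x) = inner ℂ (adjoint T x) (adjoint T x) := by
      rw [ContinuousLinearMap.adjoint_inner_left]; rfl
    rw [hDp2, ContinuousLinearMap.sub_apply, inner_sub_right, h2,
      ContinuousLinearMap.one_apply] at h1
    simp only [inner_self_eq_norm_sq_to_K] at h1
    exact_mod_cast h1
  have hsum : ∀ h : H, HasSum (fun n : ℕ => ‖Dp (((adjoint T) ^ n) h)‖ ^ 2) (‖C h‖ ^ 2) := by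
    intro h
    have h1 := lp.hasSum_norm (p := 2) (by norm_num) (C h)
    have h2 : ∀ n : ℕ, ‖Dp (((adjoint T) ^ n) h)‖ = ‖(C h) n‖ := by
      intro n
      rw [← hC h n]; rfl
    simp only [h2]
    simpa using h1
  have hpart : ∀ (h : H) (N : ℕ), ∑ n ∈ Finset.range N, ‖Dp (((adjoint T) ^ n) h)‖ ^ 2
      = ‖h‖ ^ 2 - ‖((adjoint T) ^ N) h‖ ^ 2 := by
    intro h N
    induction N with
    | zero => simp
    | succ N ih =>
      rw [Finset.sum_range_succ, ih, key, pow_succ' (adjoint T) N,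
        ContinuousLinearMap.mul_apply]
      ring
  have hlim : ∀ h : H, Tendsto (fun N : ℕ => ‖((adjoint T) ^ N) h‖ ^ 2) atTop
      (nhds (‖h‖ ^ 2 - ‖C h‖ ^ 2)) := by
    intro h
    have h1 := ((hsum h).tendsto_sum_nat).const_sub (‖h‖ ^ 2)
    refine h1.congr fun N => ?_
    rw [hpart]; ring
  constructor
  · intro hiso h
    have h1 := hlim h
    rw [hiso h, sub_self] at h1
    rw [tendsto_zero_iff_norm_tendsto_zero]
    have h2 := h1.sqrt
    simpa using h2
  · intro hst h
    have h1 : Tendsto (fun N : ℕ => ‖((adjoint T) ^ N) h‖ ^ 2) atTop (nhds 0) := by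
      simpa using (hst h).norm.pow 2
    have h2 := tendsto_nhds_unique (hlim h) h1
    have h3 : ‖C h‖ ^ 2 = ‖h‖ ^ 2 := by linarith
    exact (sq_eq_sq₀ (norm_nonneg _) (norm_nonneg _)).mp h3
end

section
/- Let H be a complex Hilbert space and T : H → H a *-stable contraction, with defect operators D = √(1 − T*T), D₊ = √(1 − T T*), defect spaces 𝒟 = closure(range D), 𝒟₊ = closure(range D₊), the isometry C : H → ℓ²(ℕ, 𝒟₊), (C h)ₙ = D₊ (T*)ⁿ h, and the isometry M_Θ : ℓ²(ℕ, 𝒟) → ℓ²(ℕ, 𝒟₊), (M_Θ f)ₙ = −T fₙ + Σ_{j<n} D₊ (T*)^{n−1−j} D f_j. Then the range of M_Θ equals the orthogonal complement of the range of C in ℓ²(ℕ, 𝒟₊); in particular ℓ²(ℕ, 𝒟₊) decomposes orthogonally as C(H) ⊕ M_Θ(ℓ²(ℕ, 𝒟)). (Operator version of Beurling's theorem for the shift-invariant subspace C(H)^⊥.) -/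
open ContinuousLinearMap Filter

instance {H : Type*} [NormedAddCommGroup H] [InnerProductSpace ℂ H] [CompleteSpace H]
    (D : H →L[ℂ] H) : CompleteSpace (defectSpace D) :=
  (Submodule.isClosed_topologicalClosure _).completeSpace_coe

/-- Intertwining of the defect operators. -/
theorem aux_intertwine {A : Type*} [CStarAlgebra A] [PartialOrder A] [StarOrderedRing A]
    (T D E : A) (hD : 0 ≤ D) (hE : 0 ≤ E) (hD2 : D * D = 1 - star T * T)
    (hE2 : E * E = 1 - T * star T) : D * star T = star T * E := by
  obtain ⟨X, hX⟩ : ∃ X, X = D * star T - star T * E := ⟨_, rfl⟩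
  have sD : star D = D := (IsSelfAdjoint.of_nonneg hD)
  have sE : star E = E := (IsSelfAdjoint.of_nonneg hE)
  have hsX : star X = T * D - E * T := by simp [hX, sD, sE]
  have h0 : D * X = -(X * E) := by
    have : D * X + X * E = (D * D) * star T - star T * (E * E) := by rw [hX]; noncomm_ring
    rw [hD2, hE2] at this
    rw [eq_neg_iff_add_eq_zero, this]; noncomm_ring
  have hQ : 0 ≤ star X * D * X := star_left_conjugate_nonneg hD X
  have hP : 0 ≤ star X * X := star_mul_self_nonneg X
  have h1 : star X * X * E = -(star X * D * X) := by
    rw [mul_assoc (star X) D, h0]; noncomm_ring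
  have h2 : E * (star X * X) = -(star X * D * X) := by
    have := congrArg star h1
    simpa [sD, sE, mul_assoc] using this
  have hc : Commute (star X * X) E := by
    rw [commute_iff_eq, h1, h2]
  have h3 := Commute.mul_nonneg hP hE hc
  have h4 : star X * X * E = 0 := by
    refine le_antisymm ?_ h3
    rw [h1]; simpa using hQ
  have h5 : X * E = 0 := by
    rw [← CStarRing.star_mul_self_eq_zero_iff]
    rw [star_mul, mul_assoc, ← mul_assoc (star X), h4, mul_zero]
  have h6 : D * X = 0 := by rw [h0, h5, neg_zero]
  have h7 : X * star X * X = 0 := by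
    have : X * star X * X = X * T * (D * X) - (X * E) * T * X := by rw [hsX]; noncomm_ring
    rw [this, h5, h6]; simp
  have h8 : star X * X = 0 := by
    rw [← CStarRing.star_mul_self_eq_zero_iff]
    have : star (star X * X) * (star X * X) = star X * (X * star X * X) := by
      simp [mul_assoc]
    rw [this, h7, mul_zero]
  rw [CStarRing.star_mul_self_eq_zero_iff] at h8
  rw [h8] at hX
  exact (sub_eq_zero.mp hX.symm)

section
variable {H : Type*} [NormedAddCommGroup H] [InnerProductSpace ℂ H] [CompleteSpace H]

theorem aux_intertwine_op (T D Dp : H →L[ℂ] H)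
    (hD : D.IsPositive) (hD2 : D ∘L D = 1 - adjoint T ∘L T)
    (hDp : Dp.IsPositive) (hDp2 : Dp ∘L Dp = 1 - T ∘L adjoint T) (h : H) :
    D (adjoint T h) = adjoint T (Dp h) := by
  have := aux_intertwine T D Dp ((nonneg_iff_isPositive _).2 hD)
    ((nonneg_iff_isPositive _).2 hDp) hD2 hDp2
  exact DFunLike.congr_fun this h

theorem aux_energy (T D Dp : H →L[ℂ] H)
    (hD : D.IsPositive) (hD2 : D ∘L D = 1 - adjoint T ∘L T)
    (hDp : Dp.IsPositive) (hDp2 : Dp ∘L Dp = 1 - T ∘L adjoint T) (a b : H) :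
    ‖T a + Dp b‖ ^ 2 + ‖D a - adjoint T b‖ ^ 2 = ‖a‖ ^ 2 + ‖b‖ ^ 2 := by
  have hi := aux_intertwine_op T D Dp hD hD2 hDp hDp2
  have e1 : ‖T a‖ ^ 2 + ‖D a‖ ^ 2 = ‖a‖ ^ 2 := by
    have h1 : D (D a) = a - adjoint T (T a) := DFunLike.congr_fun hD2 a
    have h2 : inner ℂ (D a) (D a) = inner ℂ a a - inner ℂ (T a) (T a) := by
      rw [hD.inner_left_eq_inner_right, h1, inner_sub_right, adjoint_inner_right]
    have h3 := congrArg (RCLike.re (K := ℂ)) h2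
    rw [map_sub, inner_self_eq_norm_sq, inner_self_eq_norm_sq, inner_self_eq_norm_sq] at h3
    linarith
  have e2 : ‖Dp b‖ ^ 2 + ‖adjoint T b‖ ^ 2 = ‖b‖ ^ 2 := by
    have h1 : Dp (Dp b) = b - T (adjoint T b) := DFunLike.congr_fun hDp2 b
    have h2 : inner ℂ (Dp b) (Dp b) = inner ℂ b b - inner ℂ (adjoint T b) (adjoint T b) := by
      rw [hDp.inner_left_eq_inner_right, h1, inner_sub_right, adjoint_inner_left]
    have h3 := congrArg (RCLike.re (K := ℂ)) h2
    rw [map_sub, inner_self_eq_norm_sq, inner_self_eq_norm_sq, inner_self_eq_norm_sq] at h3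
    linarith
  have e3 : inner ℂ (T a) (Dp b) = inner ℂ (D a) (adjoint T b) := by
    rw [hD.inner_left_eq_inner_right, hi, adjoint_inner_right]
  rw [@norm_add_sq ℂ, @norm_sub_sq ℂ, e3]
  linarith

/-- Membership in the other defect space. -/
theorem aux_mem (T D Dp : H →L[ℂ] H)
    (hi : ∀ h, D (adjoint T h) = adjoint T (Dp h)) (y : H) (hy : y ∈ defectSpace Dp) :
    adjoint T y ∈ defectSpace D := by
  have hs : defectSpace Dp ≤ (defectSpace D).comap (adjoint T : H →ₗ[ℂ] H) := by
    apply Submodule.topologicalClosure_minimal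
    · rintro _ ⟨h, rfl⟩
      apply Submodule.le_topologicalClosure
      exact ⟨adjoint T h, hi h⟩
    · exact (Submodule.isClosed_topologicalClosure _).preimage (adjoint T).continuous
  exact hs hy

theorem aux_lp_sum_le {K : Submodule ℂ H} (f : lp (fun _ : ℕ => K) 2) (s : Finset ℕ) :
    ∑ i ∈ s, ‖(f i : H)‖ ^ 2 ≤ ‖f‖ ^ 2 := by
  have := lp.sum_rpow_le_norm_rpow (p := 2) (by simp) f s
  simpa using this

theorem aux_memlp {K : Submodule ℂ H} (f : ℕ → K) (c : ℝ)
    (h : ∀ s : Finset ℕ, ∑ i ∈ s, ‖(f i : H)‖ ^ 2 ≤ c) : Memℓp f 2 := by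
  apply memℓp_gen' (C := c)
  simpa using h

theorem aux_shift {K : Submodule ℂ H} (y : lp (fun _ : ℕ => K) 2) (n : ℕ) :
    ∃ s : lp (fun _ : ℕ => K) 2, (∀ k, s k = y (n + k)) ∧ ‖s‖ ≤ ‖y‖ := by
  have hb : ∀ t : Finset ℕ, ∑ i ∈ t, ‖(y (n + i) : H)‖ ^ 2 ≤ ‖y‖ ^ 2 := by
    intro t
    have := aux_lp_sum_le y (t.map (addLeftEmbedding n))
    simpa using this
  refine ⟨⟨fun k => y (n + k), aux_memlp _ _ hb⟩, fun k => rfl, ?_⟩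
  apply lp.norm_le_of_forall_sum_le (by simp) (norm_nonneg _)
  simpa using hb

end

theorem beurling_decomposition_star_stable
    {H : Type*} [NormedAddCommGroup H] [InnerProductSpace ℂ H] [CompleteSpace H]
    (T D Dp : H →L[ℂ] H) (hT : ‖T‖ ≤ 1)
    (hD : D.IsPositive) (hD2 : D ∘L D = 1 - adjoint T ∘L T)
    (hDp : Dp.IsPositive) (hDp2 : Dp ∘L Dp = 1 - T ∘L adjoint T)
    (hstable : ∀ h : H, Tendsto (fun n : ℕ => ((adjoint T) ^ n) h) atTop (nhds 0))
    (C : H →L[ℂ] lp (fun _ : ℕ => ↥(defectSpace Dp)) 2)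
    (hC : ∀ (h : H) (n : ℕ), ((C h) n : H) = Dp (((adjoint T) ^ n) h))
    (M : lp (fun _ : ℕ => ↥(defectSpace D)) 2 →L[ℂ]
         lp (fun _ : ℕ => ↥(defectSpace Dp)) 2)
    (hM : ∀ (f : lp (fun _ : ℕ => ↥(defectSpace D)) 2) (n : ℕ),
      ((M f) n : H)
        = -(T (f n : H)) +
          ∑ j ∈ Finset.range n, Dp (((adjoint T) ^ (n - 1 - j)) (D (f j : H)))) :
    LinearMap.range (M : lp (fun _ : ℕ => ↥(defectSpace D)) 2 →ₗ[ℂ]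
        lp (fun _ : ℕ => ↥(defectSpace Dp)) 2)
      = (LinearMap.range (C : H →ₗ[ℂ] lp (fun _ : ℕ => ↥(defectSpace Dp)) 2))ᗮ := by
  have hi := aux_intertwine_op T D Dp hD hD2 hDp hDp2
  have hi' : ∀ h, Dp (T h) = T (D h) := by
    have := aux_intertwine_op (adjoint T) Dp D hDp (by simpa using hDp2) hD (by simpa using hD2)
    simpa using this
  have hDD : ∀ a, D (D a) = a - adjoint T (T a) := fun a => DFunLike.congr_fun hD2 a
  have hDDp : ∀ a, Dp (Dp a) = a - T (adjoint T a) := fun a => DFunLike.congr_fun hDp2 a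
  have hen := aux_energy T D Dp hD hD2 hDp hDp2
  have hen' : ∀ a b, ‖adjoint T a + D b‖ ^ 2 + ‖Dp a - T b‖ ^ 2 = ‖a‖ ^ 2 + ‖b‖ ^ 2 := by
    have := aux_energy (adjoint T) Dp D hDp (by simpa using hDp2) hD (by simpa using hD2)
    simpa using this
  -- the state sequence
  have hstate : ∀ (f : lp (fun _ : ℕ => ↥(defectSpace D)) 2) (x : ℕ → H), x 0 = 0 →
      (∀ n, x (n + 1) = adjoint T (x n) + D (f n : H)) →
      ∀ n, ((M f) n : H) = Dp (x n) - T (f n : H) := by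
    intro f x h0 hs n
    have hx : ∀ n, x n = ∑ j ∈ Finset.range n, ((adjoint T) ^ (n - 1 - j)) (D (f j : H)) := by
      intro n
      induction n with
      | zero => simpa using h0
      | succ n ih =>
        rw [hs, ih, Finset.sum_range_succ, map_sum]
        congr 1
        · apply Finset.sum_congr rfl
          intro j hj
          have hj := Finset.mem_range.1 hj
          have : n + 1 - 1 - j = (n - 1 - j) + 1 := by omega
          rw [this, pow_succ']
          rfl
        · simp
    rw [hM, hx, map_sum]
    abel
  apply le_antisymm
  · rintro _ ⟨f, rfl⟩
    rw [Submodule.mem_orthogonal]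
    rintro _ ⟨h, rfl⟩
    show inner ℂ (C h) (M f) = 0
    let x : ℕ → H := fun n => Nat.rec 0 (fun n xn => adjoint T xn + D (f n : H)) n
    have hx0 : x 0 = 0 := rfl
    have hxs : ∀ n, x (n + 1) = adjoint T (x n) + D (f n : H) := fun n => rfl
    have hy := hstate f x hx0 hxs
    clear_value x
    have hxb' : ∀ n, ‖x n‖ ^ 2 ≤ ∑ i ∈ Finset.range n, ‖(f i : H)‖ ^ 2 := by
      intro n
      induction n with
      | zero => simp [hx0]
      | succ n ih =>
        rw [Finset.sum_range_succ, hxs]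
        have := hen' (x n) (f n)
        nlinarith [sq_nonneg ‖Dp (x n) - T (f n : H)‖]
    have hxb : ∀ n, ‖x n‖ ≤ ‖f‖ := fun n =>
      (sq_le_sq₀ (norm_nonneg _) (norm_nonneg _)).1 ((hxb' n).trans (aux_lp_sum_le f _))
    have hsum : ∀ N, ∑ n ∈ Finset.range N, inner ℂ (C h n) (M f n)
        = - inner ℂ (((adjoint T) ^ N) h) (x N) := by
      intro N
      induction N with
      | zero => simp [hx0]
      | succ N ih =>
        rw [Finset.sum_range_succ, ih, Submodule.coe_inner, hC, hy, hxs, pow_succ']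
        have e : Dp (Dp (x N) - T (f N : H)) = x N - T (adjoint T (x N) + D (f N : H)) := by
          rw [map_sub, hDDp, hi', map_add]; abel
        rw [hDp.inner_left_eq_inner_right, e, inner_sub_right]
        rw [mul_apply_eq_comp, adjoint_inner_left]
        ring
    have ht := (lp.hasSum_inner (𝕜 := ℂ) (C h) (M f)).tendsto_sum_nat
    refine tendsto_nhds_unique ht ?_
    simp only [hsum]
    rw [tendsto_zero_iff_norm_tendsto_zero]
    have hz : Tendsto (fun N => ‖((adjoint T) ^ N) h‖ * ‖f‖) atTop (nhds 0) := by
      simpa using (hstable h).norm.mul_const ‖f‖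
    refine squeeze_zero (fun _ => norm_nonneg _) (fun N => ?_) hz
    rw [norm_neg]
    exact (norm_inner_le_norm _ _).trans (by gcongr; exact hxb N)
  · intro y hy
    rw [Submodule.mem_orthogonal] at hy
    choose s hs hsn using aux_shift y
    obtain ⟨x, hx⟩ : ∃ x : ℕ → H, ∀ n, x n = adjoint C (s n) := ⟨_, fun _ => rfl⟩
    have hx0 : x 0 = 0 := by
      have hs0 : s 0 = y := by
        ext k
        rw [hs, zero_add]
      refine ext_inner_left ℂ fun h => ?_
      rw [hx, hs0, adjoint_inner_right, inner_zero_right]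
      exact hy _ ⟨h, rfl⟩
    have hxb : ∀ n, ‖x n‖ ≤ ‖adjoint C‖ * ‖y‖ := by
      intro n
      rw [hx]
      exact ((adjoint C).le_opNorm _).trans (by gcongr; exact hsn n)
    have hxr : ∀ n, x n = T (x (n + 1)) + Dp (y n : H) := by
      intro n
      refine ext_inner_left ℂ fun h => ?_
      rw [inner_add_right, hx, hx, adjoint_inner_right, ← adjoint_inner_left T,
        adjoint_inner_right, lp.inner_eq_tsum, lp.inner_eq_tsum,
        (lp.summable_inner (𝕜 := ℂ) (C h) (s n)).tsum_eq_zero_add, add_comm]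
      congr 1
      · apply tsum_congr
        intro k
        rw [hs, hs, Submodule.coe_inner, Submodule.coe_inner, hC, hC, pow_succ,
          show n + (k + 1) = n + 1 + k by omega]
        rfl
      · rw [hs, Submodule.coe_inner, hC, hDp.inner_left_eq_inner_right]
        rfl
    have hmem : ∀ n, D (x (n + 1)) - adjoint T (y n : H) ∈ defectSpace D := fun n =>
      Submodule.sub_mem _ (Submodule.le_topologicalClosure _ ⟨_, rfl⟩)
        (aux_mem T D Dp hi _ (y n).2)
    have hE : ∀ N, ∑ n ∈ Finset.range N, ‖D (x (n + 1)) - adjoint T (y n : H)‖ ^ 2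
        = ‖x N‖ ^ 2 + ∑ n ∈ Finset.range N, ‖(y n : H)‖ ^ 2 := by
      intro N
      induction N with
      | zero => simp [hx0]
      | succ N ih =>
        rw [Finset.sum_range_succ, Finset.sum_range_succ, ih]
        have := hen (x (N + 1)) (y N)
        rw [← hxr] at this
        linarith
    let f : lp (fun _ : ℕ => ↥(defectSpace D)) 2 :=
      ⟨fun n => ⟨_, hmem n⟩, aux_memlp _ ((‖adjoint C‖ * ‖y‖) ^ 2 + ‖y‖ ^ 2) (by
        intro t
        obtain ⟨N, hN⟩ := t.exists_nat_subset_range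
        refine (Finset.sum_le_sum_of_subset_of_nonneg hN
          (fun _ _ _ => by positivity)).trans ?_
        refine (hE N).trans_le ?_
        gcongr
        · exact hxb N
        · exact aux_lp_sum_le y _)⟩
    have hf : ∀ n, (f n : H) = D (x (n + 1)) - adjoint T (y n : H) := fun n => rfl
    refine ⟨f, ?_⟩
    show M f = y
    ext n
    rw [hstate f x hx0, hf]
    · rw [hxr n, map_sub, map_add, hi', hDDp]; abel
    · intro n
      rw [hf, hxr n, map_sub, map_add, hi, hDD]; abel
end

section
/- Let H be a complex Hilbert space and T : H → H a contraction, with D = √(1 − T*T), 𝒟 = closure(range D), and U on H ⊕ ℓ²(ℕ, 𝒟) defined by U(h, f) = (T h, g), g₀ = D h, g_{n+1} = f_n. Then T is *-stable (i.e. (T*)ⁿ h → 0 for all h ∈ H) if and only if there exist a complex Hilbert space E and a surjective linear isometry W : H ⊕ ℓ²(ℕ, 𝒟) → ℓ²(ℕ, E) with W ∘ U = S_E ∘ W, where S_E is the right shift on ℓ²(ℕ, E). (The minimal isometric dilation of T is unitarily equivalent to a one-sided shift exactly when T is *-stable.) -/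
open ContinuousLinearMap Filter

universe u

/-- Vectors on which the powers of `A` tend to zero. -/
def stableSub {K : Type*} [NormedAddCommGroup K] [InnerProductSpace ℂ K]
    (A : K →L[ℂ] K) : Submodule ℂ K where
  carrier := {x | Tendsto (fun n : ℕ => (A ^ n) x) atTop (nhds 0)}
  add_mem' := by
    intro a b ha hb
    have ha' : Tendsto (fun n : ℕ => (A ^ n) a) atTop (nhds 0) := ha
    have hb' : Tendsto (fun n : ℕ => (A ^ n) b) atTop (nhds 0) := hb
    have h := ha'.add hb'
    rw [add_zero] at h
    exact h.congr fun n => ((A ^ n).map_add a b).symm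
  zero_mem' := by simp
  smul_mem' := by
    intro c x hx
    have hx' : Tendsto (fun n : ℕ => (A ^ n) x) atTop (nhds 0) := hx
    have h := hx'.const_smul c
    rw [smul_zero] at h
    exact h.congr fun n => ((A ^ n).map_smul c x).symm

lemma norm_pow_apply_le_of_contraction {K : Type*} [NormedAddCommGroup K] [InnerProductSpace ℂ K]
    (A : K →L[ℂ] K) (hA : ∀ x, ‖A x‖ ≤ ‖x‖) (n : ℕ) (x : K) : ‖(A ^ n) x‖ ≤ ‖x‖ := by
  induction n with
  | zero => simp
  | succ k ih =>
    rw [pow_succ']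
    exact (hA _).trans ih

lemma isClosed_stableSub {K : Type*} [NormedAddCommGroup K] [InnerProductSpace ℂ K]
    (A : K →L[ℂ] K) (hA : ∀ x, ‖A x‖ ≤ ‖x‖) : IsClosed (stableSub A : Set K) := by
  rw [← isSeqClosed_iff_isClosed]
  intro u x hu hx
  change Tendsto (fun n : ℕ => (A ^ n) x) atTop (nhds 0)
  rw [Metric.tendsto_atTop] at hx ⊢
  intro ε hε
  obtain ⟨N, hN⟩ := hx (ε / 2) (by positivity)
  have h1 : Tendsto (fun n : ℕ => (A ^ n) (u N)) atTop (nhds 0) := hu N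
  rw [Metric.tendsto_atTop] at h1
  obtain ⟨M, hM⟩ := h1 (ε / 2) (by positivity)
  refine ⟨M, fun n hn => ?_⟩
  have h2 := hM n hn
  have h3 := hN N le_rfl
  rw [dist_eq_norm] at h3
  rw [dist_zero_right] at h2 ⊢
  have h4 := norm_pow_apply_le_of_contraction A hA n (u N - x)
  have h5 : (A ^ n) x = (A ^ n) (u N) - (A ^ n) (u N - x) := by rw [map_sub]; abel
  rw [h5]
  have := norm_sub_le ((A ^ n) (u N)) ((A ^ n) (u N - x))
  linarith

lemma mem_stableSub_of_apply {K : Type*} [NormedAddCommGroup K] [InnerProductSpace ℂ K]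
    (A : K →L[ℂ] K) {x : K} (h : A x ∈ stableSub A) : x ∈ stableSub A := by
  change Tendsto (fun n : ℕ => (A ^ n) x) atTop (nhds 0)
  rw [← tendsto_add_atTop_iff_nat 1]
  have h' : Tendsto (fun n : ℕ => (A ^ n) (A x)) atTop (nhds 0) := h
  refine h'.congr fun n => ?_
  rw [pow_succ]; rfl

lemma mem_of_singles {K E : Type*} [NormedAddCommGroup K] [InnerProductSpace ℂ K]
    [NormedAddCommGroup E] [InnerProductSpace ℂ E]
    (S : Submodule ℂ K) (hS : IsClosed (S : Set K)) (L : lp (fun _ : ℕ => E) 2 →L[ℂ] K)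
    (h : ∀ n e, L (lp.single 2 n e) ∈ S) (f : lp (fun _ : ℕ => E) 2) : L f ∈ S := by
  have h1 := (lp.hasSum_single (p := 2) (by simp) f).mapL L
  exact hS.mem_of_tendsto h1 (Eventually.of_forall fun s => S.sum_mem fun i _ => h _ _)

lemma hasSum_norm_sq_lp {E : Type*} [NormedAddCommGroup E] (f : lp (fun _ : ℕ => E) 2) :
    HasSum (fun i => ‖f i‖ ^ 2) (‖f‖ ^ 2) := by
  have := lp.hasSum_norm (p := 2) (by simp) f
  simpa using this

lemma adjoint_le_of_isometry {K : Type*} [NormedAddCommGroup K] [InnerProductSpace ℂ K]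
    [CompleteSpace K] (U : K →L[ℂ] K) (hU : ∀ x, ‖U x‖ = ‖x‖) (x : K) :
    ‖adjoint U x‖ ≤ ‖x‖ := by
  have h1 : ‖adjoint U‖ ≤ 1 := by
    rw [LinearIsometryEquiv.norm_map]
    exact U.opNorm_le_bound zero_le_one (fun x => by rw [hU, one_mul])
  simpa using (adjoint U).le_of_opNorm_le h1 x

/-- Pure part of the Wold decomposition. -/
lemma wold_pure {K : Type u} [NormedAddCommGroup K] [InnerProductSpace ℂ K]
    [CompleteSpace K] (U : K →L[ℂ] K) (hU : ∀ x, ‖U x‖ = ‖x‖)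
    (hs : ∀ x, Tendsto (fun n : ℕ => (adjoint U ^ n) x) atTop (nhds 0)) :
    ∃ (E : Type u) (_ : NormedAddCommGroup E) (_ : InnerProductSpace ℂ E)
        (_ : CompleteSpace E), ∃ W : K ≃ₗᵢ[ℂ] lp (fun _ : ℕ => E) 2,
          ∀ x : K, (W (U x)) 0 = 0 ∧ ∀ n : ℕ, (W (U x)) (n + 1) = (W x) n := by
  have hUU : ∀ x, adjoint U (U x) = x := by
    intro x
    have := (norm_map_iff_adjoint_comp_self U).1 hU
    exact congrArg (fun A : K →L[ℂ] K => A x) this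
  let E : Submodule ℂ K := LinearMap.ker (adjoint U : K →ₗ[ℂ] K)
  have hEc : IsClosed (E : Set K) := (adjoint U).isClosed_ker
  have : CompleteSpace E := hEc.completeSpace_coe
  let P : K →ₗ[ℂ] E := LinearMap.codRestrict E
    ((ContinuousLinearMap.id ℂ K - U ∘L adjoint U : K →L[ℂ] K) : K →ₗ[ℂ] K) (by
      intro c
      simp [E, hUU])
  have hP : ∀ y, ((P y : E) : K) = y - U (adjoint U y) := fun y => by simp [P]
  have hPn : ∀ y, ‖P y‖ ^ 2 = ‖y‖ ^ 2 - ‖adjoint U y‖ ^ 2 := by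
    intro y
    have h0 : ‖P y‖ = ‖y - U (adjoint U y)‖ := by rw [← hP]; rfl
    rw [h0, @norm_sub_sq ℂ, hU, ← adjoint_inner_left, inner_self_eq_norm_sq]
    ring
  have hsum : ∀ x, HasSum (fun n : ℕ => ‖P ((adjoint U ^ n) x)‖ ^ 2) (‖x‖ ^ 2) := by
    intro x
    rw [hasSum_iff_tendsto_nat_of_nonneg (fun i => by positivity)]
    have h1 : ∀ n, ∑ i ∈ Finset.range n, ‖P ((adjoint U ^ i) x)‖ ^ 2
        = ‖x‖ ^ 2 - ‖(adjoint U ^ n) x‖ ^ 2 := by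
      intro n
      induction n with
      | zero => simp
      | succ k ih =>
        have hk : (adjoint U ^ (k + 1)) x = adjoint U ((adjoint U ^ k) x) := by
          rw [pow_succ']; rfl
        rw [Finset.sum_range_succ, ih, hPn, hk]
        ring
    simp_rw [h1]
    have h2 := ((hs x).norm.pow 2).const_sub (‖x‖ ^ 2)
    simpa using h2
  let W0 : K →ₗ[ℂ] lp (fun _ : ℕ => E) 2 :=
    { toFun := fun x => ⟨fun n => P ((adjoint U ^ n) x), memℓp_gen (by
        simpa using (hsum x).summable)⟩
      map_add' := by
        intro x y
        apply lp.ext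
        funext n
        change P _ = P _ + P _
        rw [map_add, map_add]
      map_smul' := by
        intro c x
        apply lp.ext
        funext n
        change P _ = c • P _
        rw [map_smul, map_smul] }
  have hW0 : ∀ x n, W0 x n = P ((adjoint U ^ n) x) := fun x n => rfl
  let W1 : K →ₗᵢ[ℂ] lp (fun _ : ℕ => E) 2 :=
    { toLinearMap := W0
      norm_map' := by
        intro x
        have h1 := (hasSum_norm_sq_lp (W0 x)).unique (hsum x)
        exact (sq_eq_sq₀ (norm_nonneg _) (norm_nonneg _)).1 h1 }
  have hW1 : ∀ x n, W1 x n = P ((adjoint U ^ n) x) := fun x n => rfl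
  have hshift : ∀ x : K, (W1 (U x)) 0 = 0 ∧ ∀ n : ℕ, (W1 (U x)) (n + 1) = (W1 x) n := by
    intro x
    constructor
    · rw [hW1]
      apply Subtype.ext
      rw [hP]
      simp [hUU]
    · intro n
      rw [hW1, hW1, pow_succ]
      simp only [mul_apply_eq_comp, hUU]
  have hsurj : Function.Surjective W1 := by
    intro g
    have hcl : IsClosed ((LinearMap.range W1.toLinearMap : Submodule ℂ _) : Set (lp (fun _ : ℕ => E) 2)) := by
      rw [LinearMap.coe_range]
      exact W1.isometry.isClosedEmbedding.isClosed_range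
    have := mem_of_singles (LinearMap.range W1.toLinearMap) hcl (ContinuousLinearMap.id ℂ _) (by
      intro n e
      refine ⟨(U ^ n) (e : K), ?_⟩
      change W1 _ = lp.single 2 n e
      induction n with
      | zero =>
        ext m
        have he : adjoint U (e : K) = 0 := e.2
        rw [hW1, lp.single_apply]
        cases m with
        | zero => simp [hP, he]
        | succ m => simp [pow_succ, he]
      | succ k ih =>
        have h2 : (U ^ (k + 1)) (e : K) = U ((U ^ k) (e : K)) := by rw [pow_succ']; rfl
        rw [h2]
        apply lp.ext
        funext m
        cases m with
        | zero => rw [(hshift _).1]; simp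
        | succ m =>
          rw [(hshift _).2, ih, lp.single_apply, lp.single_apply]
          simp [Pi.single_apply]) g
    exact this
  exact ⟨E, inferInstance, inferInstance, inferInstance,
    LinearIsometryEquiv.ofSurjective W1 hsurj, hshift⟩

/-- An operator conjugate to the shift has a stable adjoint. -/
lemma stable_of_shift {K E : Type*} [NormedAddCommGroup K] [InnerProductSpace ℂ K]
    [CompleteSpace K] [NormedAddCommGroup E] [InnerProductSpace ℂ E] [CompleteSpace E]
    (U : K →L[ℂ] K) (hU : ∀ x, ‖U x‖ = ‖x‖) (W : K ≃ₗᵢ[ℂ] lp (fun _ : ℕ => E) 2)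
    (hW : ∀ x : K, (W (U x)) 0 = 0 ∧ ∀ n : ℕ, (W (U x)) (n + 1) = (W x) n) (x : K) :
    x ∈ stableSub (adjoint U) := by
  have hUU : ∀ x, adjoint U (U x) = x := by
    intro x
    have := (norm_map_iff_adjoint_comp_self U).1 hU
    exact congrArg (fun A : K →L[ℂ] K => A x) this
  have h := mem_of_singles (stableSub (adjoint U))
    (isClosed_stableSub _ (adjoint_le_of_isometry U hU))
    (W.symm.toContinuousLinearEquiv : lp (fun _ : ℕ => E) 2 →L[ℂ] K) (by
      intro n e
      change W.symm _ ∈ _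
      induction n with
      | zero =>
        apply mem_stableSub_of_apply
        have : adjoint U (W.symm (lp.single 2 0 e)) = 0 := by
          apply ext_inner_right ℂ
          intro y
          rw [adjoint_inner_left, ← W.inner_map_map, W.apply_symm_apply, lp.inner_single_left,
            (hW y).1]
          simp
        rw [this]
        exact Submodule.zero_mem _
      | succ k ih =>
        apply mem_stableSub_of_apply
        have : W.symm (lp.single 2 (k + 1) e) = U (W.symm (lp.single 2 k e)) := by
          rw [LinearIsometryEquiv.symm_apply_eq]
          apply lp.ext
          funext m
          cases m with
          | zero => rw [(hW _).1]; simp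
          | succ m => rw [(hW _).2]; simp [Pi.single_apply]
        rw [this, hUU]
        exact ih) (W x)
  simpa using h

/-- Let `T` be a contraction with defect operator `D` and let `U` be the isometric
dilation `U(h, f) = (T h, (D h, f₀, f₁, …))` on `H ⊕₂ ℓ²(ℕ, 𝒟)`. Then `T` is `*`-stable
if and only if there are a complex Hilbert space `E` and a surjective linear isometry
`W : H ⊕₂ ℓ²(ℕ, 𝒟) → ℓ²(ℕ, E)` with `W ∘ U = S_E ∘ W`, where `S_E` is the right shift
on `ℓ²(ℕ, E)` (expressed coefficientwise: `(W (U x))₀ = 0`, `(W (U x))_{n+1} = (W x)ₙ`).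
The minimal isometric dilation of `T` is unitarily equivalent to a one-sided shift
exactly when `T` is `*`-stable. -/
theorem dilation_conjugate_to_shift_iff_star_stable
    {H : Type u} [NormedAddCommGroup H] [InnerProductSpace ℂ H] [CompleteSpace H]
    (T D : H →L[ℂ] H) (hT : ‖T‖ ≤ 1)
    (hD : D.IsPositive) (hD2 : D ∘L D = 1 - adjoint T ∘L T)
    (U : WithLp 2 (H × lp (fun _ : ℕ => ↥(defectSpace D)) 2) →L[ℂ]
         WithLp 2 (H × lp (fun _ : ℕ => ↥(defectSpace D)) 2))
    (hU : ∀ (h : H) (f : lp (fun _ : ℕ => ↥(defectSpace D)) 2),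
        ((WithLp.equiv 2 _) (U ((WithLp.equiv 2 _).symm (h, f)))).1 = T h ∧
        ((((WithLp.equiv 2 _) (U ((WithLp.equiv 2 _).symm (h, f)))).2 0 : H) = D h) ∧
        ∀ n : ℕ, ((WithLp.equiv 2 _) (U ((WithLp.equiv 2 _).symm (h, f)))).2 (n + 1) = f n) :
    (∀ h : H, Tendsto (fun n : ℕ => ((adjoint T) ^ n) h) atTop (nhds 0)) ↔
      ∃ (E : Type u) (_ : NormedAddCommGroup E) (_ : InnerProductSpace ℂ E)
        (_ : CompleteSpace E),
        ∃ W : WithLp 2 (H × lp (fun _ : ℕ => ↥(defectSpace D)) 2) ≃ₗᵢ[ℂ]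
              lp (fun _ : ℕ => E) 2,
          ∀ x : WithLp 2 (H × lp (fun _ : ℕ => ↥(defectSpace D)) 2),
            (W (U x)) 0 = 0 ∧ ∀ n : ℕ, (W (U x)) (n + 1) = (W x) n := by
  have hcs : CompleteSpace (defectSpace D) :=
    (Submodule.isClosed_topologicalClosure _).completeSpace_coe
  have hU1 : ∀ h f, (U (WithLp.toLp 2 (h, f))).fst = T h := fun h f => (hU h f).1
  have hU2 : ∀ h f, ((U (WithLp.toLp 2 (h, f))).snd 0 : H) = D h := fun h f => (hU h f).2.1
  have hU3 : ∀ h f n, (U (WithLp.toLp 2 (h, f))).snd (n + 1) = f n := fun h f => (hU h f).2.2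
  have hDs : ∀ x y : H, inner ℂ (D x) y = inner ℂ x (D y) := fun x y =>
    hD.isSymmetric x y
  have hnorm : ∀ h : H, ‖T h‖ ^ 2 + ‖D h‖ ^ 2 = ‖h‖ ^ 2 := by
    intro h
    have h1 : D (D h) = h - adjoint T (T h) := by
      have := congrArg (fun A : H →L[ℂ] H => A h) hD2
      simpa using this
    have h2 : inner ℂ (D h) (D h) = inner ℂ h h - inner ℂ (T h) (T h) := by
      rw [hDs, h1, inner_sub_right, adjoint_inner_right]
    simp only [inner_self_eq_norm_sq_to_K] at h2
    have h3 : ‖D h‖ ^ 2 = ‖h‖ ^ 2 - ‖T h‖ ^ 2 := by exact_mod_cast h2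
    linarith
  have hiso : ∀ x, ‖U x‖ = ‖x‖ := by
    intro x
    obtain ⟨⟨h, f⟩⟩ := x
    rw [← sq_eq_sq₀ (norm_nonneg _) (norm_nonneg _), WithLp.prod_norm_sq_eq_of_L2,
      WithLp.prod_norm_sq_eq_of_L2, hU1]
    have h1 := hasSum_norm_sq_lp (U (WithLp.toLp 2 (h, f))).snd
    rw [← hasSum_nat_add_iff' 1] at h1
    simp only [hU3, Finset.sum_range_one] at h1
    have h2 := h1.unique (hasSum_norm_sq_lp f)
    have h3 : ‖(U (WithLp.toLp 2 (h, f))).snd 0‖ = ‖D h‖ := by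
      rw [← hU2 h f]; rfl
    rw [h3] at h2
    have h4 := hnorm h
    change _ = ‖h‖ ^ 2 + ‖f‖ ^ 2
    linarith
  have hUU : ∀ x, adjoint U (U x) = x := by
    intro x
    have := (norm_map_iff_adjoint_comp_self U).1 hiso
    exact congrArg (fun A : _ →L[ℂ] _ => A x) this
  have hadj1 : ∀ h, adjoint U (WithLp.toLp 2 (h, 0)) = WithLp.toLp 2 (adjoint T h, 0) := by
    intro h
    apply ext_inner_right ℂ
    rintro ⟨⟨k, g⟩⟩
    rw [adjoint_inner_left, WithLp.prod_inner_apply, WithLp.prod_inner_apply]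
    simp [hU1, adjoint_inner_left]
  have hpow : ∀ (n : ℕ) (h : H), (adjoint U ^ n) (WithLp.toLp 2 (h, 0))
      = WithLp.toLp 2 ((adjoint T ^ n) h, 0) := by
    intro n h
    induction n with
    | zero => simp
    | succ k ih =>
      rw [pow_succ', pow_succ', mul_apply_eq_comp, ih, hadj1]
      rfl
  constructor
  · intro hs
    have hH : ∀ h : H, WithLp.toLp 2 (h, 0) ∈ stableSub (adjoint U) := by
      intro h
      change Tendsto _ _ _
      simp only [hpow]
      rw [tendsto_zero_iff_norm_tendsto_zero]
      refine ((hs h).norm.congr fun n => ?_).trans (by simp)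
      rw [← sq_eq_sq₀ (norm_nonneg _) (norm_nonneg _), WithLp.prod_norm_sq_eq_of_L2]
      simp
    apply wold_pure U hiso
    rintro ⟨⟨h, f⟩⟩
    have h1 := mem_of_singles (stableSub (adjoint U))
      (isClosed_stableSub _ (adjoint_le_of_isometry U hiso))
      (((WithLp.prodContinuousLinearEquiv 2 ℂ H
        (lp (fun _ : ℕ => ↥(defectSpace D)) 2)).symm :
          _ →L[ℂ] WithLp 2 (H × lp (fun _ : ℕ => ↥(defectSpace D)) 2)) ∘L
        ContinuousLinearMap.inr ℂ H _) (by
        intro n e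
        change WithLp.toLp 2 ((0 : H), (lp.single 2 n e : lp (fun _ : ℕ => ↥(defectSpace D)) 2)) ∈ _
        induction n with
        | zero =>
          apply mem_stableSub_of_apply
          have : adjoint U (WithLp.toLp 2 ((0 : H), (lp.single 2 0 e : lp (fun _ : ℕ => ↥(defectSpace D)) 2)))
              = WithLp.toLp 2 (D (e : H), 0) := by
            apply ext_inner_right ℂ
            rintro ⟨⟨k, g⟩⟩
            rw [adjoint_inner_left, WithLp.prod_inner_apply, WithLp.prod_inner_apply]
            have h2 := hU2 k g
            simp only [WithLp.snd] at h2
            simp only [lp.inner_single_left, Submodule.coe_inner, h2, hDs]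
            simp
          rw [this]
          exact hH _
        | succ k ih =>
          apply mem_stableSub_of_apply
          have : WithLp.toLp 2 ((0 : H), (lp.single 2 (k + 1) e : lp (fun _ : ℕ => ↥(defectSpace D)) 2))
              = U (WithLp.toLp 2 ((0 : H), (lp.single 2 k e : lp (fun _ : ℕ => ↥(defectSpace D)) 2))) := by
            apply WithLp.ofLp_injective
            apply Prod.ext
            · have := hU1 0 (lp.single 2 k e)
              simp only [WithLp.fst] at this
              rw [this]; simp
            · apply lp.ext
              funext m
              cases m with
              | zero =>
                apply Subtype.ext
                have := hU2 0 (lp.single 2 k e)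
                simp only [WithLp.snd] at this
                rw [this]; simp
              | succ m =>
                have := hU3 0 (lp.single 2 k e) m
                simp only [WithLp.snd] at this
                rw [this]; simp [Pi.single_apply]
          rw [this, hUU]
          exact ih) f
    have h2 := (stableSub (adjoint U)).add_mem (hH h) h1
    have h3 : WithLp.toLp 2 (h, (0 : lp (fun _ : ℕ => ↥(defectSpace D)) 2))
        + WithLp.toLp 2 ((0 : H), f) = WithLp.toLp 2 (h, f) := by
      rw [← WithLp.toLp_add]; simp
    change _ + WithLp.toLp 2 ((0 : H), f) ∈ _ at h2
    rw [h3] at h2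
    exact h2
  · rintro ⟨E, _, _, _, W, hW⟩ h
    have h1 : Tendsto _ _ _ := stable_of_shift U hiso W hW (WithLp.toLp 2 (h, 0))
    simp only [hpow] at h1
    rw [tendsto_zero_iff_norm_tendsto_zero] at h1 ⊢
    refine h1.congr fun n => ?_
    rw [← sq_eq_sq₀ (norm_nonneg _) (norm_nonneg _), WithLp.prod_norm_sq_eq_of_L2]
    simp
end
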